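/- arXiv:1804.05141 — 2 statements merged into one kernel-verified Lean document; each statement's English description precedes it below -/
import Mathlib

section
/- Let F be a finite field with q elements, let k be a natural number, let B \subseteq F \setminus \{0\} be a set of m pairwise distinct nonzero elements with m \le k, let v : B \to F be any assignment of share values, and let s \in F be any secret. Then the number of polynomials p over F of degree at most k satisfying p(0) = s and p(b) = v(b) for all b \in B equals q^{k - m}. In particular this count does not depend on s. -/
/-!
The polynomials of degree less than `n` form a vector space of dimension `n`, and by Lagrange
interpolation their evaluation at `m ≤ n` distinct points is onto `F ^ m`. By rank-nullity every
fibre of this linear map is a coset of a subspace of dimension `n - m`. The secret is one more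
value, prescribed at the point `0`, so Shamir's count is the case `n = k + 1` with `m + 1` points.
-/

open Cardinal Module Polynomial

universe u

theorem finrank_ker_of_surjective {K V W : Type*} [DivisionRing K] [AddCommGroup V] [Module K V]
    [AddCommGroup W] [Module K W] [Module.Finite K V] (f : V →ₗ[K] W)
    (hf : Function.Surjective f) :
    finrank K (LinearMap.ker f) = finrank K V - finrank K W := by
  rw [← f.finrank_range_add_finrank_ker, LinearMap.range_eq_top.2 hf, finrank_top,
    Nat.add_sub_cancel_left]

theorem mk_fiber_of_surjective {K V : Type u} {W : Type*} [DivisionRing K] [AddCommGroup V]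
    [Module K V] [AddCommGroup W] [Module K W] [Module.Finite K V] (f : V →ₗ[K] W)
    (hf : Function.Surjective f) (w : W) :
    #(f ⁻¹' {w}) = #K ^ (finrank K V - finrank K W) := by
  have fiber_equiv_ker : f ⁻¹' {w} ≃ LinearMap.ker f :=
    f.toAddMonoidHom.fiberEquivKerOfSurjective hf w
  rw [fiber_equiv_ker.cardinal_eq, cardinalMk_eq_cardinalMk_field_pow_rank K, ← finrank_eq_rank,
    power_natCast, finrank_ker_of_surjective f hf]

theorem finrank_degreeLT (R : Type*) [Semiring R] [StrongRankCondition R] (n : ℕ) :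
    finrank R (degreeLT R n) = n := by
  rw [(degreeLTEquiv R n).finrank_eq, finrank_fin_fun]

section EvalNodes

variable {R ι : Type*} [Semiring R] (s : Finset ι) (x : ι → R) (n : ℕ)

/-- The evaluation of polynomials of degree less than `n` at the nodes `x i`, `i ∈ s`: the encoding
map of a Reed–Solomon code. In secret sharing it yields the shares, and the secret at
the node `0`. -/
noncomputable def evalNodes : degreeLT R n →ₗ[R] s → R :=
  LinearMap.pi fun i => leval (x i) ∘ₗ (degreeLT R n).subtype

@[simp]
theorem evalNodes_apply (p : degreeLT R n) (i : s) : evalNodes s x n p i = (p : R[X]).eval (x i) :=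
  rfl

end EvalNodes

theorem evalNodes_surjective {F ι : Type*} [Field F] {s : Finset ι} {x : ι → F} {n : ℕ}
    (hx : Set.InjOn x s) (hn : s.card ≤ n) : Function.Surjective (evalNodes s x n) := by
  classical
  intro y
  let p := (Lagrange.funEquivDegreeLT hx).symm y
  exact ⟨⟨p, degreeLT_mono hn p.2⟩, (Lagrange.funEquivDegreeLT hx).apply_symm_apply y⟩

theorem mk_degree_lt_and_eval_eq {F : Type u} {ι : Type*} [Field F] {s : Finset ι} {x : ι → F}
    {n : ℕ} (hx : Set.InjOn x s) (hn : s.card ≤ n) (y : ι → F) :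
    #{p : F[X] // p.degree < n ∧ ∀ i ∈ s, p.eval (x i) = y i} = #F ^ (n - s.card) := by
  have equiv_fiber : evalNodes s x n ⁻¹' {fun i : s => y i} ≃
      {p : F[X] // p.degree < n ∧ ∀ i ∈ s, p.eval (x i) = y i} :=
    (Equiv.subtypeEquivRight fun p => by simp [funext_iff]).trans <|
      (Equiv.subtypeSubtypeEquivSubtypeInter (· ∈ degreeLT F n)
        fun p => ∀ i ∈ s, p.eval (x i) = y i).trans <|
      Equiv.subtypeEquivRight fun p => by rw [mem_degreeLT]
  rw [← equiv_fiber.cardinal_eq, mk_fiber_of_surjective _ (evalNodes_surjective hx hn),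
    finrank_degreeLT, finrank_fintype_fun_eq_card, Fintype.card_coe]

theorem shamir_sharing_count_general (F : Type*) [Field F] (k : ℕ) (B : Finset F)
    (hB0 : (0 : F) ∉ B) (hBk : B.card ≤ k) (v : F → F) (s : F) :
    #{p : F[X] // p.degree ≤ (k : WithBot ℕ) ∧ p.eval 0 = s ∧ ∀ b ∈ B, p.eval b = v b} =
      #F ^ (k - B.card) := by
  classical
  have degree_iff (p : F[X]) : p.degree ≤ k ↔ p.degree < (k + 1 : ℕ) := by
    rw [← mem_degreeLE, ← degreeLT_succ_eq_degreeLE, mem_degreeLT]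
  have values_iff (p : F[X]) : (p.eval 0 = s ∧ ∀ b ∈ B, p.eval b = v b) ↔
      ∀ b ∈ insert 0 B, p.eval (id b) = Function.update v 0 s b := by
    rw [Finset.forall_mem_insert, Function.update_self]
    refine and_congr_right' (forall₂_congr fun b hb => ?_)
    rw [Function.update_of_ne (ne_of_mem_of_not_mem hb hB0), id]
  have card_insert : (insert 0 B).card = B.card + 1 := Finset.card_insert_of_notMem hB0
  simp only [degree_iff, values_iff]
  rw [mk_degree_lt_and_eval_eq Function.injective_id.injOn
    (card_insert.trans_le (Nat.add_le_add_right hBk 1)), card_insert, Nat.add_sub_add_right]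

/-- Counting Shamir sharings: over a finite field with `q` elements, for any set `B` of
`m ≤ k` pairwise distinct nonzero points, any share values `v` on `B`, and any secret `s`,
the number of polynomials `p` of degree at most `k` with `p(0) = s` and `p(b) = v(b)` for
all `b ∈ B` equals `q ^ (k - m)`; in particular it does not depend on `s`. -/
theorem shamir_sharing_count
    (F : Type*) [Field F] [Fintype F] (q k : ℕ) (hq : Fintype.card F = q)
    (B : Finset F) (hB0 : (0 : F) ∉ B) (hBk : B.card ≤ k)
    (v : F → F) (s : F) :
    Nat.card {p : Polynomial F //
      p.degree ≤ (k : WithBot ℕ) ∧ p.eval 0 = s ∧ ∀ b ∈ B, p.eval b = v b} =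
      q ^ (k - B.card) := by
  rw [Nat.card, shamir_sharing_count_general F k B hB0 hBk v s, map_pow, ← Nat.card,
    Nat.card_eq_fintype_card, hq]
end

section
/- Let F be a finite field with q elements, let k be a natural number, let B \subseteq F \setminus \{0\} be a set of at most k pairwise distinct nonzero elements, and let v : B \to F be any assignment of share values. Then for any two secrets s, s' \in F, the set of polynomials p of degree at most k with p(0) = s and p(b) = v(b) for all b \in B has the same cardinality as the set of polynomials p' of degree at most k with p'(0) = s' and p'(b) = v(b) for all b \in B. -/
/-!
The polynomial `∏ i ∈ S, (X - x i)` has degree at most `k` and vanishes at every observed share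
point, and its value at the secret's point is a unit. Some multiple `r` of it therefore takes the
value `s' - s` there, and `p ↦ p + r` is a bijection from the sharings of `s` onto those of `s'`
that leaves every observed share unchanged.
-/

section ShamirPolynomials

open Polynomial Finset

variable {R ι : Type*}

/-- The polynomials with which a dealer of threshold `k` may share the secret `s`, placed at the
point `a`, so that each party `i ∈ S` receives the share `v i` at its point `x i`. The points and
shares are functions on all of `ι`, of which only the values on `S` matter. -/
def shamirPolynomials [Semiring R] (k : ℕ) (a s : R) (S : Finset ι) (x v : ι → R) : Set R[X] :=
  {p | p.degree ≤ (k : WithBot ℕ) ∧ p.eval a = s ∧ ∀ i ∈ S, p.eval (x i) = v i}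

theorem add_mem_shamirPolynomials_iff [Ring R] {k : ℕ} {a s t : R} {S : Finset ι}
    {x v w : ι → R} {p r : R[X]} (hr : r ∈ shamirPolynomials k a t S x w) :
    p + r ∈ shamirPolynomials k a (s + t) S x (v + w) ↔ p ∈ shamirPolynomials k a s S x v := by
  obtain ⟨hdeg, hsecret, hshares⟩ := hr
  have hdeg_iff : (p + r).degree ≤ (k : WithBot ℕ) ↔ p.degree ≤ (k : WithBot ℕ) := by
    simp only [← mem_degreeLE] at hdeg ⊢
    exact Submodule.add_mem_iff_left _ hdeg
  refine and_congr hdeg_iff (and_congr ?_ (forall₂_congr fun i hi => ?_))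
  · rw [eval_add, hsecret, add_left_inj]
  · rw [eval_add, hshares i hi, Pi.add_apply, add_left_inj]

section CommRing

variable [CommRing R] {k : ℕ} {a : R} {S : Finset ι} {x : ι → R}

theorem degree_nodal_le_card : (Lagrange.nodal S x).degree ≤ (#S : WithBot ℕ) := by
  nontriviality R
  exact Lagrange.degree_nodal.le

theorem isUnit_eval_nodal (hx : ∀ i ∈ S, IsUnit (a - x i)) :
    IsUnit ((Lagrange.nodal S x).eval a) := by
  rw [Lagrange.eval_nodal]
  exact IsUnit.prod_iff.mpr hx

theorem shamirPolynomials_zero_nonempty (hx : ∀ i ∈ S, IsUnit (a - x i)) (hS : #S ≤ k) (c : R) :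
    (shamirPolynomials k a c S x 0).Nonempty := by
  obtain ⟨d, hd⟩ := (isUnit_eval_nodal hx).dvd (a := c)
  refine ⟨d • Lagrange.nodal S x, ?_, ?_, fun i hi => ?_⟩
  · calc (d • Lagrange.nodal S x).degree
        ≤ (Lagrange.nodal S x).degree := degree_smul_le _ _
      _ ≤ (#S : WithBot ℕ) := degree_nodal_le_card
      _ ≤ (k : WithBot ℕ) := mod_cast hS
  · rw [eval_smul, smul_eq_mul, mul_comm, hd]
  · rw [eval_smul, Lagrange.eval_nodal_at_node hi, smul_zero, Pi.zero_apply]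

theorem shamir_perfect_secrecy_general (hx : ∀ i ∈ S, IsUnit (a - x i)) (hS : #S ≤ k)
    (v : ι → R) (s s' : R) :
    Nonempty (shamirPolynomials k a s S x v ≃ shamirPolynomials k a s' S x v) := by
  obtain ⟨r, hr⟩ := shamirPolynomials_zero_nonempty hx hS (s' - s)
  refine ⟨(Equiv.addRight r).subtypeEquiv fun p => ?_⟩
  simpa using (add_mem_shamirPolynomials_iff (s := s) (v := v) (p := p) hr).symm

end CommRing

end ShamirPolynomials

/-- Perfect secrecy of Shamir sharing: over a finite field with `q` elements, for any set
`B` of at most `k` pairwise distinct nonzero points and any share values `v` on `B`, the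
polynomials of degree at most `k` consistent with the shares and secret `s` are equinumerous
with those consistent with the shares and secret `s'`, for any two secrets `s, s'`. -/
theorem shamir_perfect_secrecy
    (F : Type*) [Field F] [Fintype F] (q k : ℕ) (hq : Fintype.card F = q)
    (B : Finset F) (hB0 : (0 : F) ∉ B) (hBk : B.card ≤ k)
    (v : F → F) (s s' : F) :
    Nat.card {p : Polynomial F //
      p.degree ≤ (k : WithBot ℕ) ∧ p.eval 0 = s ∧ ∀ b ∈ B, p.eval b = v b} =
    Nat.card {p : Polynomial F //
      p.degree ≤ (k : WithBot ℕ) ∧ p.eval 0 = s' ∧ ∀ b ∈ B, p.eval b = v b} := by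
  have hB (b : F) (hb : b ∈ B) : IsUnit (0 - id b) := by
    simpa using ne_of_mem_of_not_mem hb hB0
  exact (shamir_perfect_secrecy_general hB hBk v s s').elim Nat.card_congr
end
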